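/- arXiv:2206.09567 — 2 statements merged into one kernel-verified Lean document; each statement's English description precedes it below -/
import Mathlib

section
/- (2-FWL can count common neighbors.) For every label set Σ, all labeled graphs G = (V,E,l) and G' = (V',E',l') over Σ, and all ordered pairs (p,q) ∈ V × V and (p',q') ∈ V' × V': if the 2-FWL colors at iteration 1 agree, i.e. c_F¹(p,q) = c_F¹(p',q'), then the number of common neighbors of p and q in G equals the number of common neighbors of p' and q' in G', i.e. |N(p) ∩ N(q)| = |N(p') ∩ N(q')|. In particular, 2-FWL-indistinguishable links have equal numbers of common neighbors. -/
open scoped Classical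

universe u v

/-- The common 1-WL color type over label set `σ`:
`C 0 = σ`, `C (t+1) = C t × Multiset (C t)`. -/
def WL1Color (σ : Type u) : ℕ → Type u
  | 0 => σ
  | t + 1 => WL1Color σ t × Multiset (WL1Color σ t)

/-- The 1-WL coloring of a labeled graph `(G, l)`:
`c¹⁰(v) = l v`, `c¹ᵗ⁺¹(v) = (c¹ᵗ(v), {{c¹ᵗ(u) : u ∈ N(v)}})`. -/
noncomputable def wl1 {σ : Type u} {V : Type v} [Fintype V] (G : SimpleGraph V)
    (l : V → σ) : (t : ℕ) → V → WL1Color σ t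
  | 0 => l
  | t + 1 => fun v => (wl1 G l t v, (G.neighborFinset v).val.map (wl1 G l t))

/-- The type of initial pair colors over label set `σ`. -/
def PairColor0 (σ : Type u) : Type u := σ × σ × Bool × Bool

/-- Initial pair color `c⁰(p,q) = (l p, l q, 1_{(p,q)∈E}, 1_{p=q})`. -/
noncomputable def pairInit {σ : Type u} {V : Type v} (G : SimpleGraph V) (l : V → σ)
    (e : V × V) : PairColor0 σ :=
  (l e.1, l e.2, decide (G.Adj e.1 e.2), decide (e.1 = e.2))

/-- The common (plain/local) 2-WL pair color type over label set `σ`. -/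
def WL2Color (σ : Type u) : ℕ → Type u
  | 0 => PairColor0 σ
  | t + 1 => WL2Color σ t × Multiset (WL2Color σ t) × Multiset (WL2Color σ t)

/-- The plain 2-WL coloring:
`c₂ᵗ⁺¹(p,q) = (c₂ᵗ(p,q), {{c₂ᵗ(u,q) : u ∈ V}}, {{c₂ᵗ(p,v) : v ∈ V}})`. -/
noncomputable def wl2 {σ : Type u} {V : Type v} [Fintype V] (G : SimpleGraph V)
    (l : V → σ) : (t : ℕ) → V × V → WL2Color σ t
  | 0 => pairInit G l
  | t + 1 => fun e =>
      (wl2 G l t e,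
        Finset.univ.val.map (fun u => wl2 G l t (u, e.2)),
        Finset.univ.val.map (fun v => wl2 G l t (e.1, v)))

/-- The local 2-WL (2-WL_L) coloring:
`cₗᵗ⁺¹(p,q) = (cₗᵗ(p,q), {{cₗᵗ(u,q) : (u,q) ∈ E}}, {{cₗᵗ(p,v) : (p,v) ∈ E}})`. -/
noncomputable def wl2L {σ : Type u} {V : Type v} [Fintype V] (G : SimpleGraph V)
    (l : V → σ) : (t : ℕ) → V × V → WL2Color σ t
  | 0 => pairInit G l
  | t + 1 => fun e =>
      (wl2L G l t e,
        (Finset.univ.filter (fun u => G.Adj u e.2)).val.map (fun u => wl2L G l t (u, e.2)),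
        (Finset.univ.filter (fun v => G.Adj e.1 v)).val.map (fun v => wl2L G l t (e.1, v)))

/-- The common (plain/local) 2-FWL pair color type over label set `σ`. -/
def FWLColor (σ : Type u) : ℕ → Type u
  | 0 => PairColor0 σ
  | t + 1 => FWLColor σ t × Multiset (FWLColor σ t × FWLColor σ t)

/-- The 2-FWL coloring:
`c_Fᵗ⁺¹(p,q) = (c_Fᵗ(p,q), {{(c_Fᵗ(u,q), c_Fᵗ(p,u)) : u ∈ V}})`. -/
noncomputable def fwl2 {σ : Type u} {V : Type v} [Fintype V] (G : SimpleGraph V)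
    (l : V → σ) : (t : ℕ) → V × V → FWLColor σ t
  | 0 => pairInit G l
  | t + 1 => fun e =>
      (fwl2 G l t e,
        Finset.univ.val.map (fun u => (fwl2 G l t (u, e.2), fwl2 G l t (e.1, u))))

/-- The local 2-FWL (2-FWL_L) coloring:
`c_FLᵗ⁺¹(p,q) = (c_FLᵗ(p,q), {{(c_FLᵗ(u,q), c_FLᵗ(p,u)) : (u,q) ∈ E or (p,u) ∈ E}})`. -/
noncomputable def fwl2L {σ : Type u} {V : Type v} [Fintype V] (G : SimpleGraph V)
    (l : V → σ) : (t : ℕ) → V × V → FWLColor σ t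
  | 0 => pairInit G l
  | t + 1 => fun e =>
      (fwl2L G l t e,
        (Finset.univ.filter (fun u => G.Adj u e.2 ∨ G.Adj e.1 u)).val.map
          (fun u => (fwl2L G l t (u, e.2), fwl2L G l t (e.1, u))))

/-- A target link: an ordered pair of distinct, non-adjacent vertices. -/
def IsTargetLink {V : Type v} (G : SimpleGraph V) (e : V × V) : Prop :=
  e.1 ≠ e.2 ∧ ¬ G.Adj e.1 e.2

/-- `(p,q)` in `(G,l)` and `(p',q')` in `(G',l')` are 1-WL-indistinguishable. -/
noncomputable def WL1Indist {σ : Type u} {V V' : Type v} [Fintype V] [Fintype V']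
    (G : SimpleGraph V) (l : V → σ) (G' : SimpleGraph V') (l' : V' → σ)
    (e : V × V) (e' : V' × V') : Prop :=
  ∀ t : ℕ, wl1 G l t e.1 = wl1 G' l' t e'.1 ∧ wl1 G l t e.2 = wl1 G' l' t e'.2

/-- 2-WL-indistinguishability. -/
noncomputable def WL2Indist {σ : Type u} {V V' : Type v} [Fintype V] [Fintype V']
    (G : SimpleGraph V) (l : V → σ) (G' : SimpleGraph V') (l' : V' → σ)
    (e : V × V) (e' : V' × V') : Prop :=
  ∀ t : ℕ, wl2 G l t e = wl2 G' l' t e'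

/-- Local 2-WL (2-WL_L) indistinguishability. -/
noncomputable def WL2LIndist {σ : Type u} {V V' : Type v} [Fintype V] [Fintype V']
    (G : SimpleGraph V) (l : V → σ) (G' : SimpleGraph V') (l' : V' → σ)
    (e : V × V) (e' : V' × V') : Prop :=
  ∀ t : ℕ, wl2L G l t e = wl2L G' l' t e'

/-- 2-FWL-indistinguishability. -/
noncomputable def FWL2Indist {σ : Type u} {V V' : Type v} [Fintype V] [Fintype V']
    (G : SimpleGraph V) (l : V → σ) (G' : SimpleGraph V') (l' : V' → σ)
    (e : V × V) (e' : V' × V') : Prop :=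
  ∀ t : ℕ, fwl2 G l t e = fwl2 G' l' t e'

/-- Local 2-FWL (2-FWL_L) indistinguishability. -/
noncomputable def FWL2LIndist {σ : Type u} {V V' : Type v} [Fintype V] [Fintype V']
    (G : SimpleGraph V) (l : V → σ) (G' : SimpleGraph V') (l' : V' → σ)
    (e : V × V) (e' : V' × V') : Prop :=
  ∀ t : ℕ, fwl2L G l t e = fwl2L G' l' t e'

/-- The 0/1 labeling trick: augment the labeling with indicator of membership in `{p, q}`. -/
noncomputable def label01 {σ : Type u} {V : Type v} (l : V → σ) (e : V × V) :
    V → σ × Bool :=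
  fun v => (l v, decide (v = e.1 ∨ v = e.2))

/-- 1-WL-with-0/1-labeling indistinguishability of target links. -/
noncomputable def WL1LabelIndist {σ : Type u} {V V' : Type v} [Fintype V] [Fintype V']
    (G : SimpleGraph V) (l : V → σ) (G' : SimpleGraph V') (l' : V' → σ)
    (e : V × V) (e' : V' × V') : Prop :=
  WL1Indist G (label01 l e) G' (label01 l' e') e e'

/-- The number of common neighbors of `p` and `q` in `G`. -/
noncomputable def commonNbrCount {V : Type v} [Fintype V] (G : SimpleGraph V)
    (e : V × V) : ℕ :=
  (G.neighborFinset e.1 ∩ G.neighborFinset e.2).card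

/-- The initial pair color recorded in a 2-FWL color: iteration `t + 1` stores the color of
iteration `t` as its first component. -/
def FWLColor.initial {σ : Type u} : (t : ℕ) → FWLColor σ t → PairColor0 σ
  | 0 => id
  | t + 1 => fun c => FWLColor.initial t c.1

/-- The adjacency bit `1_{(p,q)∈E}` recorded in a 2-FWL color, as a proposition. -/
def FWLColor.IsEdge {σ : Type u} {t : ℕ} (c : FWLColor σ t) : Prop :=
  (FWLColor.initial t c).2.2.1 = true

/-- The number of common neighbors as decoded from a 2-FWL color alone: a vertex `u` contributes
the entry `(c_Fᵗ(u,q), c_Fᵗ(p,u))`, whose two colors record whether `u` is adjacent to `q` and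
to `p`. -/
noncomputable def FWLColor.commonNbrCount {σ : Type u} {t : ℕ} (c : FWLColor σ (t + 1)) : ℕ :=
  Multiset.countP (fun d : FWLColor σ t × FWLColor σ t => d.1.IsEdge ∧ d.2.IsEdge) c.2

section

variable {σ : Type u} {V : Type v} [Fintype V] (G : SimpleGraph V) (l : V → σ) (t : ℕ) (e : V × V)

theorem initial_fwl2 : FWLColor.initial t (fwl2 G l t e) = pairInit G l e := by
  induction t with
  | zero => rfl
  | succ _ ih => exact ih

theorem isEdge_fwl2 : (fwl2 G l t e).IsEdge ↔ G.Adj e.1 e.2 := by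
  rw [FWLColor.IsEdge, initial_fwl2]
  exact decide_eq_true_iff

theorem commonNbrCount_eq_card_filter :
    commonNbrCount G e = (Finset.univ.filter fun u => G.Adj u e.2 ∧ G.Adj e.1 u).card := by
  rw [commonNbrCount]
  congr 1
  ext u
  simp [and_comm, G.adj_comm u e.2]

theorem commonNbrCount_fwl2 : (fwl2 G l (t + 1) e).commonNbrCount = commonNbrCount G e :=
  calc (fwl2 G l (t + 1) e).commonNbrCount
      = (Finset.univ.filter fun u =>
          (fwl2 G l t (u, e.2)).IsEdge ∧ (fwl2 G l t (e.1, u)).IsEdge).card :=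
        Multiset.countP_map _ _ _
    _ = (Finset.univ.filter fun u => G.Adj u e.2 ∧ G.Adj e.1 u).card := by
        simp only [isEdge_fwl2]
    _ = commonNbrCount G e := (commonNbrCount_eq_card_filter G e).symm

end

/-- 2-FWL can count common neighbors: agreement of 2-FWL colors at iteration 1 forces
equal numbers of common neighbors. -/
theorem fwl2_counts_common_neighbors :
    ∀ (σ : Type u) (V V' : Type v) [Fintype V] [Fintype V']
      (G : SimpleGraph V) (l : V → σ) (G' : SimpleGraph V') (l' : V' → σ)
      (e : V × V) (e' : V' × V'),
      fwl2 G l 1 e = fwl2 G' l' 1 e' →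
      commonNbrCount G e = commonNbrCount G' e' := by
  intro σ V V' _ _ G l G' l' e e' h
  rw [← commonNbrCount_fwl2 G l 0 e, ← commonNbrCount_fwl2 G' l' 0 e', h]
end

section
/- (2-WL cannot count common neighbors.) There exist an unlabeled graph G = (V,E) and target links (p,q) and (p',q') in G such that (p,q) and (p',q') are 2-WL-indistinguishable, yet the number of common neighbors of p and q differs from the number of common neighbors of p' and q', i.e. |N(p) ∩ N(q)| ≠ |N(p') ∩ N(q')|. -/
open scoped Classical

universe u v

/-! 2-WL updates the color of `(p, q)` from the unordered row and column of the color matrix through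
it, never matching `(p, u)` with `(u, q)`. In a regular unlabeled graph every row and every column
of initial colors has the same content, so refinement never gets past the initial coloring and all
target links keep one color. In the 6-cycle, which is 2-regular, vertices at distance two have a
common neighbor while antipodal vertices have none. -/

theorem multisetRel_of_forall_of_card_eq {α β : Type*} {r : α → β → Prop} {s : Multiset α}
    {t : Multiset β} (h : ∀ a ∈ s, ∀ b ∈ t, r a b) (hcard : s.card = t.card) :
    Multiset.Rel r s t := by
  have hconst : s.map (fun _ => ()) = t.map (fun _ => ()) := by
    rw [Multiset.map_const', Multiset.map_const', hcard]
  exact (Multiset.rel_map.1 (Multiset.rel_eq.2 hconst)).mono fun a ha b hb _ => h a ha b hb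

section TwoWL

variable {σ : Type u} {V V' : Type v} [Fintype V] [Fintype V']

theorem wl2_eq_of_bisimulation {G : SimpleGraph V} {l : V → σ} {G' : SimpleGraph V'}
    {l' : V' → σ} (r : V × V → V' × V' → Prop)
    (hinit : ∀ {e e'}, r e e' → pairInit G l e = pairInit G' l' e')
    (hcol : ∀ {e e'}, r e e' → Multiset.Rel (fun u u' => r (u, e.2) (u', e'.2))
      Finset.univ.val Finset.univ.val)
    (hrow : ∀ {e e'}, r e e' → Multiset.Rel (fun v v' => r (e.1, v) (e'.1, v'))
      Finset.univ.val Finset.univ.val)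
    (t : ℕ) {e : V × V} {e' : V' × V'} (he : r e e') : wl2 G l t e = wl2 G' l' t e' := by
  induction t generalizing e e' with
  | zero => exact hinit he
  | succ t ih =>
    have map_eq {f : V → WL2Color σ t} {f' : V' → WL2Color σ t}
        (h : Multiset.Rel (fun u u' => f u = f' u') Finset.univ.val Finset.univ.val) :
        Finset.univ.val.map f = Finset.univ.val.map f' :=
      Multiset.rel_eq.1 (Multiset.rel_map.2 h)
    exact Prod.ext (ih he) (Prod.ext
      (map_eq ((hcol he).mono fun _ _ _ _ h => ih h))
      (map_eq ((hrow he).mono fun _ _ _ _ h => ih h)))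

end TwoWL

section PairInit

variable {σ : Type u} {V V' : Type v}

theorem pairInit_const_eq_iff {G : SimpleGraph V} {G' : SimpleGraph V'} {a : σ} {e : V × V}
    {e' : V' × V'} :
    pairInit G (fun _ => a) e = pairInit G' (fun _ => a) e' ↔
      (G.Adj e.1 e.2 ↔ G'.Adj e'.1 e'.2) ∧ (e.1 = e.2 ↔ e'.1 = e'.2) := by
  refine Prod.ext_iff.trans ?_
  simp [pairInit]

theorem pairInit_const_swap (G : SimpleGraph V) (a : σ) (p q : V) :
    pairInit G (fun _ => a) (p, q) = pairInit G (fun _ => a) (q, p) :=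
  pairInit_const_eq_iff.2 ⟨G.adj_comm p q, eq_comm⟩

theorem IsTargetLink.pairInit_const_eq {G : SimpleGraph V} {G' : SimpleGraph V'} {e : V × V}
    {e' : V' × V'} (he : IsTargetLink G e) (he' : IsTargetLink G' e') (a : σ) :
    pairInit G (fun _ => a) e = pairInit G' (fun _ => a) e' :=
  pairInit_const_eq_iff.2 ⟨iff_of_false he.2 he'.2, iff_of_false he.1 he'.1⟩

end PairInit

section Regular

variable {σ : Type u} {V V' : Type v} [Fintype V] [Fintype V']

theorem univ_val_eq_cons_neighborFinset_add_compl (G : SimpleGraph V) (p : V)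
    [Fintype (G.neighborSet p)] :
    Finset.univ.val = p ::ₘ ((G.neighborFinset p).val + (Gᶜ.neighborFinset p).val) := by
  have hdisj : Disjoint (G.neighborFinset p).val (Gᶜ.neighborFinset p).val :=
    Multiset.disjoint_left.2 fun hq hq' =>
      ((G.compl_adj _ _).1 ((Gᶜ.mem_neighborFinset _ _).1 hq')).2
        ((G.mem_neighborFinset _ _).1 hq)
  have hnodup : (p ::ₘ ((G.neighborFinset p).val + (Gᶜ.neighborFinset p).val)).Nodup :=
    Multiset.nodup_cons.2 ⟨by simp, Multiset.nodup_add.2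
      ⟨(G.neighborFinset p).nodup, (Gᶜ.neighborFinset p).nodup, hdisj⟩⟩
  refine (Multiset.Nodup.ext Finset.univ.nodup hnodup).2 fun q => ?_
  simp only [Finset.mem_val, Finset.mem_univ, Multiset.mem_cons, Multiset.mem_add,
    SimpleGraph.mem_neighborFinset, SimpleGraph.compl_adj, true_iff]
  tauto

theorem rel_pairInit_const_row {G : SimpleGraph V} {G' : SimpleGraph V'} {p : V} {p' : V'}
    [Fintype (G.neighborSet p)] [Fintype (G'.neighborSet p')]
    (hcard : Fintype.card V = Fintype.card V') (hdeg : G.degree p = G'.degree p') (a : σ) :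
    Multiset.Rel
      (fun v v' => pairInit G (fun _ => a) (p, v) = pairInit G' (fun _ => a) (p', v'))
      Finset.univ.val Finset.univ.val := by
  have hcompl : Gᶜ.degree p = G'ᶜ.degree p' := by
    rw [SimpleGraph.degree_compl, SimpleGraph.degree_compl, hcard, hdeg]
  rw [univ_val_eq_cons_neighborFinset_add_compl G p,
    univ_val_eq_cons_neighborFinset_add_compl G' p']
  refine .cons ?self (.add (multisetRel_of_forall_of_card_eq ?adj hdeg)
    (multisetRel_of_forall_of_card_eq ?nonadj hcompl))
  case self =>
    exact pairInit_const_eq_iff.2 ⟨iff_of_false G.irrefl G'.irrefl, iff_of_true rfl rfl⟩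
  case adj =>
    intro v hv v' hv'
    have hv := (G.mem_neighborFinset p v).1 hv
    have hv' := (G'.mem_neighborFinset p' v').1 hv'
    exact pairInit_const_eq_iff.2 ⟨iff_of_true hv hv', iff_of_false hv.ne hv'.ne⟩
  case nonadj =>
    intro v hv v' hv'
    have hv : IsTargetLink G (p, v) :=
      (G.compl_adj p v).1 ((Gᶜ.mem_neighborFinset p v).1 hv)
    have hv' : IsTargetLink G' (p', v') :=
      (G'.compl_adj p' v').1 ((G'ᶜ.mem_neighborFinset p' v').1 hv')
    exact hv.pairInit_const_eq hv' a

theorem wl2_const_eq_of_isRegularOfDegree {G : SimpleGraph V} {G' : SimpleGraph V'}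
    [G.LocallyFinite] [G'.LocallyFinite] {d : ℕ}
    (hG : G.IsRegularOfDegree d) (hG' : G'.IsRegularOfDegree d)
    (hcard : Fintype.card V = Fintype.card V') {a : σ} (t : ℕ) {e : V × V} {e' : V' × V'}
    (he : pairInit G (fun _ => a) e = pairInit G' (fun _ => a) e') :
    wl2 G (fun _ => a) t e = wl2 G' (fun _ => a) t e' := by
  have hrow (p : V) (p' : V') : Multiset.Rel
      (fun v v' => pairInit G (fun _ => a) (p, v) = pairInit G' (fun _ => a) (p', v'))
      Finset.univ.val Finset.univ.val :=
    rel_pairInit_const_row hcard ((hG p).trans (hG' p').symm) a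
  have hcol (q : V) (q' : V') : Multiset.Rel
      (fun u u' => pairInit G (fun _ => a) (u, q) = pairInit G' (fun _ => a) (u', q'))
      Finset.univ.val Finset.univ.val := by
    simpa only [pairInit_const_swap _ _ q, pairInit_const_swap _ _ q'] using hrow q q'
  exact wl2_eq_of_bisimulation
    (fun e e' => pairInit G (fun _ => a) e = pairInit G' (fun _ => a) e') id
    (fun _ => hcol _ _) (fun _ => hrow _ _) t he

theorem IsTargetLink.wl2Indist_const_of_isRegularOfDegree {G : SimpleGraph V} {G' : SimpleGraph V'}
    [G.LocallyFinite] [G'.LocallyFinite] {d : ℕ}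
    {e : V × V} {e' : V' × V'} (he : IsTargetLink G e) (he' : IsTargetLink G' e')
    (hG : G.IsRegularOfDegree d) (hG' : G'.IsRegularOfDegree d)
    (hcard : Fintype.card V = Fintype.card V') (a : σ) :
    WL2Indist G (fun _ => a) G' (fun _ => a) e e' := fun t =>
  wl2_const_eq_of_isRegularOfDegree hG hG' hcard t (he.pairInit_const_eq he' a)

end Regular

theorem isRegularOfDegree_cycleGraph (n : ℕ) :
    (SimpleGraph.cycleGraph (n + 3)).IsRegularOfDegree 2 := fun _ =>
  SimpleGraph.cycleGraph_degree_three_le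

theorem isTargetLink_cycleGraph_iff {n : ℕ} {p q : Fin (n + 2)} :
    IsTargetLink (SimpleGraph.cycleGraph (n + 2)) (p, q) ↔ p ≠ q ∧ ¬(p - q = 1 ∨ q - p = 1) := by
  rw [IsTargetLink, SimpleGraph.cycleGraph_adj]

theorem commonNbrCount_cycleGraph (n : ℕ) (p q : Fin (n + 2)) :
    commonNbrCount (SimpleGraph.cycleGraph (n + 2)) (p, q) =
      (({p - 1, p + 1} : Finset (Fin (n + 2))) ∩ {q - 1, q + 1}).card := by
  rw [commonNbrCount, ← SimpleGraph.cycleGraph_neighborFinset,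
    ← SimpleGraph.cycleGraph_neighborFinset]
  congr!

/-- 2-WL cannot count common neighbors: there is a single unlabeled graph with two
2-WL-indistinguishable target links having different numbers of common neighbors. -/
theorem wl2_cannot_count_common_neighbors :
    ∃ (n : ℕ) (G : SimpleGraph (Fin n)) (e e' : Fin n × Fin n),
      IsTargetLink G e ∧ IsTargetLink G e' ∧
      WL2Indist G (fun _ => ()) G (fun _ => ()) e e' ∧
      commonNbrCount G e ≠ commonNbrCount G e' := by
  have hreg := isRegularOfDegree_cycleGraph 3
  have h02 : IsTargetLink (SimpleGraph.cycleGraph 6) (0, 2) :=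
    isTargetLink_cycleGraph_iff.2 (by decide)
  have h03 : IsTargetLink (SimpleGraph.cycleGraph 6) (0, 3) :=
    isTargetLink_cycleGraph_iff.2 (by decide)
  have hcount02 : commonNbrCount (SimpleGraph.cycleGraph 6) (0, 2) = 1 :=
    (commonNbrCount_cycleGraph 4 0 2).trans (by decide)
  have hcount03 : commonNbrCount (SimpleGraph.cycleGraph 6) (0, 3) = 0 :=
    (commonNbrCount_cycleGraph 4 0 3).trans (by decide)
  exact ⟨6, SimpleGraph.cycleGraph 6, (0, 2), (0, 3), h02, h03,
    h02.wl2Indist_const_of_isRegularOfDegree h03 hreg hreg rfl (),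
    by rw [hcount02, hcount03]; exact one_ne_zero⟩
end
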